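/- For every ε > 0 there exists δ > 0 (which may be taken to be 2^{−O(1/ε)}) such that for every bipartite graph G with parts X and Y satisfying |X| = n and |Y| = 2n: if im(G) < (1 − ε)·n, then log₂ irr(G) < (1 − δ)·n. -/

import Mathlib

/-- A set of vertices is independent in `G` if it spans no edge. -/
def IsIndepSet {V : Type*} (G : SimpleGraph V) (s : Set V) : Prop :=
  ∀ ⦃x⦄, x ∈ s → ∀ ⦃y⦄, y ∈ s → ¬ G.Adj x y

/-- A maximal independent set. -/
def IsMaxIndepSet {V : Type*} (G : SimpleGraph V) (s : Set V) : Prop :=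
  IsIndepSet G s ∧ ∀ t, IsIndepSet G t → s ⊆ t → s = t

/-- `mis G` is the number of maximal independent sets of `G`. -/
noncomputable def mis {V : Type*} (G : SimpleGraph V) : ℕ :=
  Nat.card {s : Set V // IsMaxIndepSet G s}

/-- `S` induces a triangle matching: within `S`, every vertex has exactly two
neighbours, and these two neighbours are adjacent; so `G[S]` is a vertex-disjoint
union of triangles. -/
def IsInducedTriangleMatching {V : Type*} (G : SimpleGraph V) (S : Finset V) : Prop :=
  ∀ x ∈ S, ∃ y ∈ S, ∃ z ∈ S, G.Adj x y ∧ G.Adj x z ∧ G.Adj y z ∧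
    ∀ w ∈ S, G.Adj x w → w = y ∨ w = z

/-- `itm G`: the largest number of triangles in an induced triangle matching. -/
noncomputable def itm {V : Type*} (G : SimpleGraph V) : ℕ :=
  sSup {k | ∃ S : Finset V, S.card = 3 * k ∧ IsInducedTriangleMatching G S}

/-- `S` induces a matching: within `S`, every vertex has exactly one neighbour. -/
def IsInducedMatching {V : Type*} (G : SimpleGraph V) (S : Finset V) : Prop :=
  ∀ x ∈ S, ∃ y ∈ S, G.Adj x y ∧ ∀ z ∈ S, G.Adj x z → z = y

/-- `im G`: the largest number of edges in an induced matching. -/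
noncomputable def im {V : Type*} (G : SimpleGraph V) : ℕ :=
  sSup {k | ∃ S : Finset V, S.card = 2 * k ∧ IsInducedMatching G S}

/-- The neighbourhood of a set of vertices. -/
def nbhd {V : Type*} (G : SimpleGraph V) (S : Set V) : Set V :=
  {y | ∃ x ∈ S, G.Adj x y}

/-- A set `J` is irredundant if no member's neighbourhood is covered by the
neighbourhoods of the other members. -/
def Irredundant {V : Type*} (G : SimpleGraph V) (J : Set V) : Prop :=
  ∀ x ∈ J, ¬ (G.neighborSet x ⊆ nbhd G (J \ {x}))

/-- `irr G X`: the number of irredundant subsets of `X`. -/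
noncomputable def irr {V : Type*} (G : SimpleGraph V) (X : Set V) : ℕ :=
  Nat.card {J : Set V // J ⊆ X ∧ Irredundant G J}

open Classical in
/-- Every member of `J` has a private neighbour inside `Y`. -/
def IrrF {V : Type*} (R : V → V → Prop) (Y J : Finset V) : Prop :=
  ∀ x ∈ J, ∃ y ∈ Y, R x y ∧ ∀ z ∈ J, z ≠ x → ¬ R z y

open Classical in
/-- Number of subsets of `X` with private neighbours in `Y`. -/
noncomputable def cntF {V : Type*} (R : V → V → Prop) (X Y : Finset V) : ℕ :=
  (X.powerset.filter (fun J => IrrF R Y J)).card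

open Classical in
/-- Number of subsets of `X` containing no block `B x`, `x ∈ W`. -/
noncomputable def cntB {V : Type*} (B : V → Finset V) (X W : Finset V) : ℕ :=
  (X.powerset.filter (fun J => ∀ x ∈ W, ¬ B x ⊆ J)).card

open Classical in
theorem cntB_step {V : Type*} (B : V → Finset V) (X W W' : Finset V) (x : V)
    (hx : x ∈ W) (hB : B x ⊆ X) (hW' : W' ⊆ W) (hd : ∀ w ∈ W', Disjoint (B w) (B x)) :
    cntB B X W ≤ (2 ^ (B x).card - 1) * cntB B (X \ B x) W' := by
  unfold cntB
  have h1 : ((B x).powerset.erase (B x)).card = 2 ^ (B x).card - 1 := by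
    rw [Finset.card_erase_of_mem (by simp), Finset.card_powerset]
  rw [← h1, ← Finset.card_product]
  refine Finset.card_le_card_of_injOn (fun J => (J ∩ B x, J \ B x)) ?_ ?_
  · intro J hJ
    simp only [Finset.coe_filter, Finset.mem_powerset, Set.mem_ofPred_eq] at hJ
    obtain ⟨hJX, hJ⟩ := hJ
    simp only [Finset.coe_product, Set.mem_prod, Finset.mem_coe, Finset.mem_erase,
      Finset.mem_powerset, Finset.mem_filter]
    refine ⟨⟨?_, Finset.inter_subset_right⟩, Finset.sdiff_subset_sdiff hJX le_rfl, ?_⟩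
    · intro h
      exact hJ x hx (Finset.inter_eq_right.mp h)
    · intro w hw h
      exact hJ w (hW' hw) (h.trans Finset.sdiff_subset)
  · intro J _ J' _ h
    simp only [Prod.mk.injEq] at h
    rw [← Finset.sdiff_union_inter J (B x), ← Finset.sdiff_union_inter J' (B x), h.1, h.2]

open Classical in
theorem cntB_bound {V : Type*} (B : V → Finset V) (M : ℕ) (s : ℝ) (hs0 : 0 ≤ s) (hs1 : s < 1)
    (hs : 1 - (2 : ℝ)⁻¹ ^ M ≤ (1 - s) ^ (M * M)) :
    ∀ (k : ℕ) (X W : Finset V), W.card = k →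
      (∀ w ∈ W, B w ⊆ X) → (∀ w ∈ W, (B w).card ≤ M) → (∀ w ∈ W, w ∈ B w) →
      (∀ p, (W.filter (fun w => p ∈ B w)).card ≤ M) →
      (cntB B X W : ℝ) ≤ 2 ^ X.card * (1 - s) ^ W.card := by
  intro k
  induction k using Nat.strong_induction_on with
  | _ k ih =>
  intro X W hk hX hM hself hp
  rcases W.eq_empty_or_nonempty with rfl | ⟨x, hx⟩
  · simp [cntB]
  set D := W.filter (fun w => ¬ Disjoint (B w) (B x)) with hD
  set W' := W.filter (fun w => Disjoint (B w) (B x)) with hW'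
  have hsub : W' ⊆ W := Finset.filter_subset _ _
  have hcard : W'.card + D.card = W.card := Finset.card_filter_add_card_filter_not _
  have hDM : D.card ≤ M * M := by
    have : D ⊆ (B x).biUnion (fun p => W.filter (fun w => p ∈ B w)) := by
      intro w hw
      rw [hD, Finset.mem_filter, Finset.not_disjoint_iff] at hw
      obtain ⟨hw, p, hp1, hp2⟩ := hw
      simp only [Finset.mem_biUnion, Finset.mem_filter]
      exact ⟨p, hp2, hw, hp1⟩
    calc D.card ≤ _ := Finset.card_le_card this
      _ ≤ (B x).card * M := Finset.card_biUnion_le_card_mul _ _ _ (fun p _ => hp p)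
      _ ≤ M * M := Nat.mul_le_mul_right _ (hM x hx)
  have hxD : x ∈ D := by
    rw [hD, Finset.mem_filter, Finset.not_disjoint_iff]
    exact ⟨hx, x, hself x hx, hself x hx⟩
  have hDpos : 0 < D.card := Finset.card_pos.mpr ⟨x, hxD⟩
  have step := cntB_step B X W W' x hx (hX x hx) hsub (fun w hw => (Finset.mem_filter.mp hw).2)
  have hrecu := ih W'.card (by omega) (X \ B x) W' rfl
    (fun w hw => Finset.subset_sdiff.mpr ⟨hX w (hsub hw), (Finset.mem_filter.mp hw).2⟩)
    (fun w hw => hM w (hsub hw)) (fun w hw => hself w (hsub hw))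
    (fun p => (Finset.card_le_card (Finset.filter_subset_filter _ hsub)).trans (hp p))
  have hXc : (X \ B x).card + (B x).card = X.card := Finset.card_sdiff_add_card_eq_card (hX x hx)
  set b := (B x).card with hb
  have hbM : b ≤ M := hM x hx
  have e1 : ((2 ^ b - 1 : ℕ) : ℝ) = 2 ^ b * (1 - (2 : ℝ)⁻¹ ^ b) := by
    rw [Nat.cast_sub Nat.one_le_two_pow]
    push_cast
    rw [mul_sub, ← mul_pow]
    norm_num
  have e2 : (1 - (2 : ℝ)⁻¹ ^ b) ≤ (1 - s) ^ D.card := by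
    have h1 : (2 : ℝ)⁻¹ ^ M ≤ (2 : ℝ)⁻¹ ^ b :=
      pow_le_pow_of_le_one (by norm_num) (by norm_num) hbM
    have h2 : (1 - s) ^ (M * M) ≤ (1 - s) ^ D.card :=
      pow_le_pow_of_le_one (by linarith) (by linarith) hDM
    linarith
  have hs' : 0 ≤ 1 - s := by linarith
  calc (cntB B X W : ℝ) ≤ ((2 ^ b - 1 : ℕ) : ℝ) * (cntB B (X \ B x) W' : ℝ) := by
        exact_mod_cast step
    _ ≤ (2 ^ b * (1 - s) ^ D.card) * (2 ^ (X \ B x).card * (1 - s) ^ W'.card) := by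
        rw [e1]
        gcongr
    _ = 2 ^ X.card * (1 - s) ^ W.card := by
        rw [← hXc, ← hcard, pow_add, pow_add]
        ring

open Classical in
theorem cntF_base {V : Type*} [Finite V] (R : V → V → Prop) (M : ℕ) (s : ℝ) (hs0 : 0 ≤ s) (hs1 : s < 1)
    (hs : 1 - (2 : ℝ)⁻¹ ^ M ≤ (1 - s) ^ (M * M)) (X Y : Finset V)
    (hdeg : ∀ x ∈ X, (Y.filter (fun y => R x y)).card < M) :
    (cntF R X Y : ℝ) ≤ 2 ^ X.card *
      (1 - s) ^ (X.filter (fun x => ¬ ∃ y ∈ Y, R x y ∧ ∀ z ∈ X, z ≠ x → ¬ R z y)).card := by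
  set W := X.filter (fun x => ¬ ∃ y ∈ Y, R x y ∧ ∀ z ∈ X, z ≠ x → ¬ R z y) with hW
  have hπ : ∀ y : V, ∃ f : Equiv.Perm V, f.IsCycleOn (X.filter (fun x => R x y)) := by
    intro y
    cases nonempty_fintype V
    obtain ⟨f, hf, _⟩ := (X.filter (fun x => R x y)).exists_cycleOn
    exact ⟨f, hf⟩
  choose π hπ using hπ
  set B : V → Finset V := fun x => insert x ((Y.filter (fun y => R x y)).image (fun y => π y x))
    with hB
  have hWX : W ⊆ X := Finset.filter_subset _ _
  have hmap : ∀ x ∈ X, ∀ y, R x y → π y x ∈ X ∧ R (π y x) y := by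
    intro x hx y hxy
    have := (hπ y).apply_mem_iff (x := x)
    simpa [hx, hxy] using this
  have hne : ∀ x ∈ W, ∀ y ∈ Y, R x y → π y x ≠ x := by
    intro x hx y hy hxy
    rw [hW, Finset.mem_filter] at hx
    obtain ⟨hx, hx2⟩ := hx
    push Not at hx2
    obtain ⟨z, hz, hzx, hzy⟩ := hx2 y hy hxy
    refine (hπ y).apply_ne ?_ ?_
    · exact ⟨x, by simp [hx, hxy], z, by simp [hz, hzy], hzx.symm⟩
    · simp [hx, hxy]
  have key := cntB_bound B M s hs0 hs1 hs W.card X W rfl ?_ ?_ ?_ ?_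
  · refine le_trans ?_ key
    norm_cast
    unfold cntF cntB
    apply Finset.card_le_card
    intro J hJ
    rw [Finset.mem_filter] at hJ ⊢
    refine ⟨hJ.1, fun x hx hBJ => ?_⟩
    have hxJ : x ∈ J := hBJ (by simp [hB])
    obtain ⟨y, hy, hxy, hpriv⟩ := hJ.2 x hxJ
    refine hpriv (π y x) (hBJ ?_) (hne x hx y hy hxy) (hmap x (hWX hx) y hxy).2
    simp only [hB, Finset.mem_insert, Finset.mem_image, Finset.mem_filter]
    exact Or.inr ⟨y, ⟨hy, hxy⟩, rfl⟩
  · intro w hw p hp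
    simp only [hB, Finset.mem_insert, Finset.mem_image, Finset.mem_filter] at hp
    rcases hp with rfl | ⟨y, ⟨hy, hwy⟩, rfl⟩
    · exact hWX hw
    · exact (hmap w (hWX hw) y hwy).1
  · intro w hw
    refine (Finset.card_insert_le _ _).trans ?_
    have := hdeg w (hWX hw)
    have h2 := Finset.card_image_le (s := Y.filter (fun y => R w y)) (f := fun y => π y w)
    omega
  · intro w hw
    simp [hB]
  · intro p
    by_cases hpX : p ∈ X
    · have hsub : W.filter (fun w => p ∈ B w) ⊆
          insert p ((Y.filter (fun y => R p y)).image (fun y => (π y).symm p)) := by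
        intro w hw
        rw [Finset.mem_filter] at hw
        obtain ⟨hw, hp⟩ := hw
        simp only [hB, Finset.mem_insert, Finset.mem_image, Finset.mem_filter] at hp ⊢
        rcases hp with rfl | ⟨y, ⟨hy, hwy⟩, rfl⟩
        · exact Or.inl rfl
        · exact Or.inr ⟨y, ⟨hy, (hmap w (hWX hw) y hwy).2⟩, by simp⟩
      refine (Finset.card_le_card hsub).trans ((Finset.card_insert_le _ _).trans ?_)
      have := hdeg p hpX
      have h2 := Finset.card_image_le (s := Y.filter (fun y => R p y))
        (f := fun y => (π y).symm p)
      omega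
    · rw [Finset.filter_false_of_mem]
      · simp
      · intro w hw hp
        simp only [hB, Finset.mem_insert, Finset.mem_image, Finset.mem_filter] at hp
        rcases hp with rfl | ⟨y, ⟨hy, hwy⟩, rfl⟩
        · exact hpX (hWX hw)
        · exact hpX (hmap w (hWX hw) y hwy).1

open Classical in
theorem cntF_step {V : Type*} (R : V → V → Prop) (X Y : Finset V) (x : V) (hx : x ∈ X) :
    cntF R X Y ≤ cntF R (X.erase x) (Y.filter (fun y => ¬ R x y)) + cntF R (X.erase x) Y := by
  unfold cntF
  rw [← Finset.card_filter_add_card_filter_not (s := X.powerset.filter (fun J => IrrF R Y J))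
    (fun J => x ∈ J)]
  refine Nat.add_le_add ?_ ?_
  · refine Finset.card_le_card_of_injOn (fun J => J.erase x) ?_ ?_
    · intro J hJ
      simp only [Finset.coe_filter, Finset.mem_filter, Finset.mem_powerset,
        Set.mem_ofPred_eq] at hJ ⊢
      obtain ⟨⟨hJX, hJ⟩, hxJ⟩ := hJ
      refine ⟨Finset.erase_subset_erase _ hJX, ?_⟩
      intro w hw
      rw [Finset.mem_erase] at hw
      obtain ⟨y, hy, hwy, hp⟩ := hJ w hw.2
      refine ⟨y, ?_, hwy, fun z hz => hp z (Finset.mem_of_mem_erase hz)⟩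
      rw [Finset.mem_filter]
      exact ⟨hy, hp x hxJ (Ne.symm hw.1)⟩
    · intro J hJ J' hJ' h
      simp only [Finset.coe_filter, Finset.mem_filter, Set.mem_ofPred_eq] at hJ hJ' h
      rw [← Finset.insert_erase hJ.2, ← Finset.insert_erase hJ'.2, h]
  · apply Finset.card_le_card
    intro J hJ
    simp only [Finset.mem_filter, Finset.mem_powerset] at hJ ⊢
    obtain ⟨⟨hJX, hJ⟩, hxJ⟩ := hJ
    exact ⟨Finset.subset_erase.mpr ⟨hJX, hxJ⟩, hJ⟩

open Classical in
theorem cntF_bound {V : Type*} [Finite V] (R : V → V → Prop) (M m : ℕ) (s μ : ℝ) (hs0 : 0 ≤ s) (hs1 : s < 1)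
    (hs : 1 - (2 : ℝ)⁻¹ ^ M ≤ (1 - s) ^ (M * M)) (hμ : 1 ≤ μ)
    (hrec : 1 + (μ ^ M)⁻¹ ≤ 2 * (1 - s)) (X₀ Y₀ : Finset V)
    (hm : ∀ L ⊆ X₀, IrrF R Y₀ L → L.card ≤ m) :
    ∀ (k : ℕ) (X Y : Finset V), X.card = k → X ⊆ X₀ → Y ⊆ Y₀ →
      (cntF R X Y : ℝ) * (1 - s) ^ m ≤ (2 * (1 - s)) ^ X.card * μ ^ Y.card := by
  have hs' : 0 ≤ 1 - s := by linarith
  have hs'' : 1 - s ≤ 1 := by linarith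
  intro k
  induction k with
  | zero =>
    intro X Y hk hX hY
    have : X = ∅ := Finset.card_eq_zero.mp hk
    subst this
    have h1 : cntF R ∅ Y ≤ 1 := by
      unfold cntF
      exact (Finset.card_filter_le _ _).trans (by simp)
    have h1' : (cntF R ∅ Y : ℝ) ≤ 1 := by exact_mod_cast h1
    have h2 : (1 - s) ^ m ≤ 1 := pow_le_one₀ hs' hs''
    have h3 : 1 ≤ μ ^ Y.card := one_le_pow₀ hμ
    simp only [Finset.card_empty, pow_zero, one_mul]
    have h4 : 0 ≤ (1 - s) ^ m := by positivity
    nlinarith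
  | succ k ih =>
    intro X Y hk hX hY
    by_cases hbig : ∃ x ∈ X, M ≤ (Y.filter (fun y => R x y)).card
    · obtain ⟨x, hx, hxM⟩ := hbig
      have hc : (X.erase x).card = k := by rw [Finset.card_erase_of_mem hx]; omega
      have hXe : X.erase x ⊆ X₀ := (Finset.erase_subset _ _).trans hX
      have i1 := ih (X.erase x) (Y.filter (fun y => ¬ R x y)) hc hXe
        ((Finset.filter_subset _ _).trans hY)
      have i2 := ih (X.erase x) Y hc hXe hY
      have st : (cntF R X Y : ℝ) ≤ cntF R (X.erase x) (Y.filter (fun y => ¬ R x y)) +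
        cntF R (X.erase x) Y := by exact_mod_cast cntF_step R X Y x hx
      have hsplit : (Y.filter (fun y => R x y)).card + (Y.filter (fun y => ¬ R x y)).card
        = Y.card := Finset.card_filter_add_card_filter_not _
      have hpos : 0 < μ := by linarith
      have h5 : μ ^ (Y.filter (fun y => ¬ R x y)).card ≤ μ ^ Y.card * (μ ^ M)⁻¹ := by
        rw [← div_eq_mul_inv, le_div_iff₀ (by positivity), ← pow_add]
        exact pow_le_pow_right₀ hμ (by omega)
      rw [hc] at i1 i2
      rw [hk]
      calc (cntF R X Y : ℝ) * (1 - s) ^ m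
          ≤ (cntF R (X.erase x) (Y.filter (fun y => ¬ R x y)) + cntF R (X.erase x) Y)
              * (1 - s) ^ m := by gcongr
        _ ≤ (2 * (1 - s)) ^ k * (μ ^ Y.card * (μ ^ M)⁻¹) + (2 * (1 - s)) ^ k * μ ^ Y.card := by
            rw [add_mul]
            refine add_le_add (i1.trans ?_) i2
            gcongr
        _ = ((2 * (1 - s)) ^ k * μ ^ Y.card) * (1 + (μ ^ M)⁻¹) := by ring
        _ ≤ ((2 * (1 - s)) ^ k * μ ^ Y.card) * (2 * (1 - s)) := by gcongr
        _ = (2 * (1 - s)) ^ (k + 1) * μ ^ Y.card := by ring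
    · push Not at hbig
      have hb := cntF_base R M s hs0 hs1 hs X Y hbig
      set W := X.filter (fun x => ¬ ∃ y ∈ Y, R x y ∧ ∀ z ∈ X, z ≠ x → ¬ R z y) with hW
      set L := X.filter (fun x => ∃ y ∈ Y, R x y ∧ ∀ z ∈ X, z ≠ x → ¬ R z y) with hL
      have hLW : L.card + W.card = X.card := Finset.card_filter_add_card_filter_not _
      have hLm : L.card ≤ m := by
        refine hm L ((Finset.filter_subset _ _).trans hX) ?_
        intro x hx
        rw [hL, Finset.mem_filter] at hx
        obtain ⟨_, y, hy, hxy, hp⟩ := hx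
        exact ⟨y, hY hy, hxy, fun z hz => hp z (Finset.filter_subset _ _ hz)⟩
      calc (cntF R X Y : ℝ) * (1 - s) ^ m
          ≤ (2 ^ X.card * (1 - s) ^ W.card) * (1 - s) ^ m := by gcongr
        _ = 2 ^ X.card * (1 - s) ^ (W.card + m) := by ring
        _ ≤ 2 ^ X.card * (1 - s) ^ X.card := by
            refine mul_le_mul_of_nonneg_left ?_ (by positivity)
            exact pow_le_pow_of_le_one hs' hs'' (by omega)
        _ = (2 * (1 - s)) ^ X.card * 1 := by rw [mul_pow, mul_one]
        _ ≤ (2 * (1 - s)) ^ X.card * μ ^ Y.card := by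
            gcongr
            exact one_le_pow₀ hμ

open Classical in
theorem card_le_im {V : Type*} [Fintype V] (G : SimpleGraph V) (X Y : Finset V)
    (hdis : Disjoint X Y)
    (hbip : ∀ a b : V, G.Adj a b → (a ∈ X ∧ b ∈ Y) ∨ (a ∈ Y ∧ b ∈ X))
    (L : Finset V) (hL : L ⊆ X) (h : IrrF G.Adj Y L) : L.card ≤ im G := by
  have hex : ∀ x : V, ∃ y, x ∈ L → (y ∈ Y ∧ G.Adj x y ∧ ∀ z ∈ L, z ≠ x → ¬ G.Adj z y) := by
    intro x
    by_cases hx : x ∈ L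
    · obtain ⟨y, h1, h2⟩ := h x hx
      exact ⟨y, fun _ => ⟨h1, h2⟩⟩
    · exact ⟨x, fun h => absurd h hx⟩
  choose f hf using hex
  have hnd : ∀ v, v ∈ X → v ∈ Y → False := fun v h1 h2 => Finset.disjoint_left.mp hdis h1 h2
  have hinj : Set.InjOn f L := by
    intro a ha b hb hab
    by_contra hne
    exact (hf b hb).2.2 a ha hne (hab ▸ (hf a ha).2.1)
  have hmem : L.card ∈ {k | ∃ S : Finset V, S.card = 2 * k ∧ IsInducedMatching G S} := by
    refine ⟨L ∪ L.image f, ?_, ?_⟩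
    · rw [Finset.card_union_of_disjoint, Finset.card_image_of_injOn hinj]
      · omega
      · rw [Finset.disjoint_left]
        intro v hv hv'
        obtain ⟨x, hx, rfl⟩ := Finset.mem_image.mp hv'
        exact hnd _ (hL hv) (hf x hx).1
    · intro v hv
      rw [Finset.mem_union, Finset.mem_image] at hv
      rcases hv with hv | ⟨x, hx, rfl⟩
      · refine ⟨f v, Finset.mem_union_right _ (Finset.mem_image_of_mem _ hv), (hf v hv).2.1, ?_⟩
        intro z hz hvz
        rw [Finset.mem_union, Finset.mem_image] at hz
        rcases hz with hz | ⟨w, hw, rfl⟩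
        · rcases hbip v z hvz with h | h
          · exact (hnd _ (hL hz) h.2).elim
          · exact (hnd _ (hL hv) h.1).elim
        · by_contra hne
          exact (hf w hw).2.2 v hv (fun h => hne (h ▸ rfl)) hvz
      · refine ⟨x, Finset.mem_union_left _ hx, (hf x hx).2.1.symm, ?_⟩
        intro z hz hvz
        rw [Finset.mem_union, Finset.mem_image] at hz
        rcases hz with hz | ⟨w, hw, rfl⟩
        · by_contra hne
          exact (hf x hx).2.2 z hz hne hvz.symm
        · rcases hbip _ _ hvz with h | h
          · exact (hnd _ h.1 (hf x hx).1).elim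
          · exact (hnd _ h.2 (hf w hw).1).elim
  refine le_csSup ⟨Fintype.card V, ?_⟩ hmem
  rintro k ⟨S, hS, _⟩
  have := S.card_le_univ
  omega

open Classical in
theorem irr_le_cntF {V : Type*} [Fintype V] (G : SimpleGraph V) (X Y : Finset V)
    (hdis : Disjoint X Y)
    (hbip : ∀ a b : V, G.Adj a b → (a ∈ X ∧ b ∈ Y) ∨ (a ∈ Y ∧ b ∈ X)) :
    irr G (X : Set V) ≤ cntF G.Adj X Y := by
  unfold irr cntF
  rw [← Nat.card_eq_finsetCard]
  have hmem : ∀ J : {J : Set V // J ⊆ (X : Set V) ∧ Irredundant G J},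
      J.1.toFinset ∈ X.powerset.filter (fun J => IrrF G.Adj Y J) := by
    rintro ⟨J, hJX, hJ⟩
    rw [Finset.mem_filter, Finset.mem_powerset]
    refine ⟨fun v hv => by simpa using hJX (by simpa using hv), ?_⟩
    intro x hx
    have hxJ : x ∈ J := by simpa using hx
    obtain ⟨y, hxy, hy⟩ := Set.not_subset.mp (hJ x hxJ)
    have hxy' : G.Adj x y := hxy
    refine ⟨y, ?_, hxy', ?_⟩
    · rcases hbip x y hxy' with h | h
      · exact h.2
      · exact (Finset.disjoint_left.mp hdis (by simpa using hJX hxJ) h.1).elim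
    · intro z hz hne hzy
      exact hy ⟨z, ⟨by simpa using hz, hne⟩, hzy⟩
  refine Nat.card_le_card_of_injective (fun J => (⟨J.1.toFinset, hmem J⟩ :
    {J // J ∈ X.powerset.filter (fun J => IrrF G.Adj Y J)})) ?_
  intro J J' h
  have h' : J.1.toFinset = J'.1.toFinset := congrArg Subtype.val h
  exact Subtype.ext (Set.toFinset_inj.mp h')

theorem irr_pos {V : Type*} [Fintype V] (G : SimpleGraph V) (X : Set V) : 0 < irr G X := by
  unfold irr
  have : Nonempty {J : Set V // J ⊆ X ∧ Irredundant G J} :=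
    ⟨⟨∅, Set.empty_subset _, fun x hx => hx.elim⟩⟩
  exact Nat.card_pos

theorem stability_unbalanced_irr :
    ∃ C : ℝ, 0 < C ∧ ∀ ε : ℝ, 0 < ε → ∃ δ : ℝ, 0 < δ ∧ (2 : ℝ) ^ (-(C / ε)) ≤ δ ∧
      ∀ (V : Type) [Fintype V] (G : SimpleGraph V) (X Y : Finset V) (n : ℕ),
        Disjoint X Y → (∀ v : V, v ∈ X ∨ v ∈ Y) →
        (∀ a b : V, G.Adj a b → (a ∈ X ∧ b ∈ Y) ∨ (a ∈ Y ∧ b ∈ X)) →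
        X.card = n → Y.card = 2 * n →
        (im G : ℝ) < (1 - ε) * (n : ℝ) →
        Real.logb 2 (irr G ↑X) < (1 - δ) * (n : ℝ) := by
  refine ⟨85, by norm_num, fun ε hε => ?_⟩
  rcases le_or_gt 1 ε with h1 | h1
  · refine ⟨1, one_pos, ?_, ?_⟩
    · apply Real.rpow_le_one_of_one_le_of_nonpos (by norm_num)
      have : 0 < 85 / ε := by positivity
      linarith
    · intro V _ G X Y n _ _ _ _ _ h
      exfalso
      have h2 : (0 : ℝ) ≤ im G := Nat.cast_nonneg _
      have h3 : (0 : ℝ) ≤ n := Nat.cast_nonneg _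
      nlinarith
  obtain ⟨M, hMdef⟩ : ∃ M : ℕ, M = ⌈16 / ε⌉₊ := ⟨_, rfl⟩
  have hM1 : 16 / ε ≤ M := hMdef ▸ Nat.le_ceil _
  have hM2 : (M : ℝ) ≤ 17 / ε := by
    have : (M : ℝ) < 16 / ε + 1 := hMdef ▸ Nat.ceil_lt_add_one (by positivity)
    have h2 : 1 ≤ 1 / ε := by rw [le_div_iff₀ hε]; linarith
    have h3 : 17 / ε = 16 / ε + 1 / ε := by ring
    linarith
  have hεM : 16 ≤ ε * M := by
    rw [div_le_iff₀ hε] at hM1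
    linarith
  have hMpos : (16 : ℝ) ≤ M := by
    have : (0 : ℝ) ≤ M := Nat.cast_nonneg _
    nlinarith
  have hM0 : (0 : ℝ) < M := by linarith
  have hM2p : (M : ℝ) ≤ 2 ^ M := by
    have : M < 2 ^ M := Nat.lt_two_pow_self
    exact_mod_cast this.le
  obtain ⟨s, hsdef⟩ : ∃ s : ℝ, s = (2 : ℝ)⁻¹ ^ M / (M * M) := ⟨_, rfl⟩
  have hs0 : 0 < s := by rw [hsdef]; positivity
  have hs4 : s ≤ 1 / 4 := by
    rw [hsdef, div_le_iff₀ (by positivity)]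
    have : (2 : ℝ)⁻¹ ^ M ≤ 1 := pow_le_one₀ (by norm_num) (by norm_num)
    nlinarith
  have hs : 1 - (2 : ℝ)⁻¹ ^ M ≤ (1 - s) ^ (M * M) := by
    have hb := one_add_mul_le_pow (a := -s) (by linarith) (M * M)
    have e : ((M * M : ℕ) : ℝ) * -s = -(2 : ℝ)⁻¹ ^ M := by
      rw [hsdef]
      push_cast
      field_simp
    rw [e] at hb
    simpa [sub_eq_add_neg] using hb
  have hrec : 1 + ((Real.exp (4 * s / M)) ^ M)⁻¹ ≤ 2 * (1 - s) := by
    rw [← Real.exp_nat_mul]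
    have e : (M : ℝ) * (4 * s / M) = 4 * s := by field_simp
    rw [e]
    have h2 : 1 + 4 * s ≤ Real.exp (4 * s) := by linarith [Real.add_one_le_exp (4 * s)]
    have h3 : (Real.exp (4 * s))⁻¹ ≤ (1 + 4 * s)⁻¹ := inv_anti₀ (by linarith) h2
    have h4 : (1 + 4 * s)⁻¹ ≤ 1 - 2 * s := by
      rw [inv_le_iff_one_le_mul₀ (by linarith)]
      nlinarith
    linarith
  have hμ : 1 ≤ Real.exp (4 * s / M) := Real.one_le_exp (by positivity)
  refine ⟨ε * s / 2, by positivity, ?_, ?_⟩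
  · have a1 : (2 : ℝ) ^ (-(85 / ε)) ≤ (2 : ℝ) ^ (-((5 * M : ℕ) : ℝ)) := by
      apply Real.rpow_le_rpow_of_exponent_le (by norm_num)
      push_cast
      have : 85 / ε = 5 * (17 / ε) := by ring
      linarith
    refine a1.trans ?_
    rw [Real.rpow_neg (by norm_num), Real.rpow_natCast]
    rw [inv_le_iff_one_le_mul₀ (by positivity), hsdef]
    have e5 : (2 : ℝ) ^ (5 * M) = 2 ^ M * (2 ^ M * 2 ^ M * 2 ^ M * 2 ^ M) := by
      rw [mul_comm, pow_mul]; ring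
    have e6 : ε * ((2 : ℝ)⁻¹ ^ M / (M * M)) / 2 * 2 ^ (5 * M)
        = (ε * (2 ^ M * 2 ^ M * 2 ^ M * 2 ^ M)) / (2 * (M * M)) := by
      rw [e5, inv_pow]
      field_simp
    have hT : (16 : ℝ) ≤ 2 ^ M := hMpos.trans hM2p
    rw [e6, le_div_iff₀ (by positivity)]
    have b1 : (M : ℝ) * M ≤ 2 ^ M * 2 ^ M := by gcongr
    have b2 : 16 ≤ ε * 2 ^ M := hεM.trans (by gcongr)
    have b3 : (16 : ℝ) * 16 ≤ (ε * 2 ^ M) * 2 ^ M := by gcongr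
    calc 1 * (2 * ((M : ℝ) * M)) ≤ (16 * 16) * (2 ^ M * 2 ^ M) := by nlinarith
      _ ≤ ((ε * 2 ^ M) * 2 ^ M) * (2 ^ M * 2 ^ M) := by gcongr
      _ = _ := by ring
  · intro V _ G X Y n hdis _ hbip hX hY him
    have hb := cntF_bound G.Adj M (im G) s (Real.exp (4 * s / M)) hs0.le (by linarith) hs hμ hrec
      X Y (fun L hL h => card_le_im G X Y hdis hbip L hL h) X.card X Y rfl le_rfl le_rfl
    have hle : (irr G (X : Set V) : ℝ) ≤ cntF G.Adj X Y := by
      exact_mod_cast irr_le_cntF G X Y hdis hbip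
    have hpos : (0 : ℝ) < irr G (X : Set V) := by exact_mod_cast irr_pos G (X : Set V)
    have hs' : 0 < 1 - s := by linarith
    have hb2 : (irr G (X : Set V) : ℝ) * (1 - s) ^ (im G)
        ≤ (2 * (1 - s)) ^ n * (Real.exp (4 * s / M)) ^ (2 * n) := by
      rw [hX, hY] at hb
      refine le_trans ?_ hb
      gcongr
    have hlog := Real.log_le_log (by positivity) hb2
    rw [Real.log_mul hpos.ne' (by positivity), Real.log_mul (by positivity) (by positivity),
      Real.log_pow, Real.log_pow, Real.log_pow, Real.log_exp,
      Real.log_mul (by norm_num) hs'.ne'] at hlog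
    push_cast at hlog
    have hls : Real.log (1 - s) ≤ -s := by
      have := Real.log_le_sub_one_of_pos hs'
      linarith
    have hn0 : (0 : ℝ) ≤ n := Nat.cast_nonneg _
    have hmu : 2 * (n : ℝ) * (4 * s / M) ≤ ε * s / 2 * n := by
      have : 4 * s / M ≤ ε * s / 4 := by
        rw [div_le_iff₀ hM0]
        nlinarith
      nlinarith
    have hgap : ε * n < n - im G := by linarith
    have hlt : ((n : ℝ) - im G) * Real.log (1 - s) < -(s * (ε * n)) := by
      have : 0 ≤ ε * n := by positivity
      nlinarith
    have hl2 : Real.log 2 ≤ 1 := by linarith [Real.log_two_lt_d9]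
    have hl2p : 0 < Real.log 2 := Real.log_pos (by norm_num)
    rw [Real.logb, div_lt_iff₀ hl2p]
    have hfin : ε * s / 2 * n * Real.log 2 ≤ ε * s / 2 * n := by
      have : 0 ≤ ε * s / 2 * n := by positivity
      nlinarith
    linarith
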